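/- Induction axiom for relativized common knowledge: for every epistemic model M, every group of agents G ⊆ A, every world w, and all formulas φ, ψ, it holds that M,w ⊨ (E_G(ψ → φ) ∧ C_G(ψ | φ → E_G(ψ → φ))) → C_G(ψ | φ). -/

import Mathlib

/-- Syntax of public announcement logic with relativized common knowledge.
`Agent` is the set of agents, `AtomP` the set of atomic propositions. -/
inductive Form (Agent AtomP : Type) : Type
  | top  : Form Agent AtomP
  | atom : AtomP → Form Agent AtomP
  | neg  : Form Agent AtomP → Form Agent AtomP
  | or   : Form Agent AtomP → Form Agent AtomP → Form Agent AtomP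
  | know : Agent → Form Agent AtomP → Form Agent AtomP
  | ev   : Set Agent → Form Agent AtomP → Form Agent AtomP
  | ck   : Set Agent → Form Agent AtomP → Form Agent AtomP → Form Agent AtomP
  | ann  : Form Agent AtomP → Form Agent AtomP → Form Agent AtomP

namespace Form
variable {Agent AtomP : Type}
/-- φ ∧ ψ -/
def and (φ ψ : Form Agent AtomP) : Form Agent AtomP := .neg (.or (.neg φ) (.neg ψ))
/-- φ → ψ -/
def imp (φ ψ : Form Agent AtomP) : Form Agent AtomP := .or (.neg φ) ψ
/-- φ ↔ ψ -/
def iff (φ ψ : Form Agent AtomP) : Form Agent AtomP := (φ.imp ψ).and (ψ.imp φ)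
end Form

/-- Truth of a PAL formula at world `w` of the epistemic model given by the set of
worlds `W`, accessibility relations `R` and valuation `V`.  A public announcement
`[!φ]ψ` is evaluated in the updated model whose worlds are the subtype of worlds
satisfying `φ`, with accessibility relations and valuation restricted accordingly. -/
def Sat {Agent AtomP : Type} :
    Form Agent AtomP → (W : Type) → (Agent → W → W → Prop) → (AtomP → Set W) → W → Prop
  | .top, _, _, _, _ => True
  | .atom p, _, _, V, w => w ∈ V p
  | .neg φ, W, R, V, w => ¬ Sat φ W R V w
  | .or φ ψ, W, R, V, w => Sat φ W R V w ∨ Sat ψ W R V w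
  | .know i φ, W, R, V, w => ∀ v, R i w v → Sat φ W R V v
  | .ev G φ, W, R, V, w => ∀ v, (∃ i ∈ G, R i w v) → Sat φ W R V v
  | .ck G φ ψ, W, R, V, w =>
      ∀ v, Relation.TransGen (fun u u' => (∃ i ∈ G, R i u u') ∧ Sat φ W R V u') w v →
        Sat ψ W R V v
  | .ann φ ψ, W, R, V, w =>
      ∀ h : Sat φ W R V w,
        Sat ψ {v : W // Sat φ W R V v} (fun i x y => R i x.1 y.1)
          (fun p => {x : {v : W // Sat φ W R V v} | x.1 ∈ V p}) ⟨w, h⟩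

/-- A formula is valid iff it is true at every world of every epistemic model. -/
def Valid {Agent AtomP : Type} (φ : Form Agent AtomP) : Prop :=
  ∀ (W : Type), Nonempty W → ∀ (R : Agent → W → W → Prop) (V : AtomP → Set W) (w : W),
    Sat φ W R V w

theorem sat_imp {Agent AtomP : Type} (φ ψ : Form Agent AtomP) (W : Type)
    (R : Agent → W → W → Prop) (V : AtomP → Set W) (w : W) :
    Sat (φ.imp ψ) W R V w ↔ (Sat φ W R V w → Sat ψ W R V w) := by
  simp only [Form.imp, Sat, imp_iff_not_or]

theorem sat_and {Agent AtomP : Type} (φ ψ : Form Agent AtomP) (W : Type)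
    (R : Agent → W → W → Prop) (V : AtomP → Set W) (w : W) :
    Sat (φ.and ψ) W R V w ↔ Sat φ W R V w ∧ Sat ψ W R V w := by
  simp only [Form.and, Sat, not_or, not_not]

/-- Induction axiom for relativized common knowledge:
`M,w ⊨ (E_G(ψ → φ) ∧ C_G(ψ | φ → E_G(ψ → φ))) → C_G(ψ | φ)`.
Here `Form.ck G ψ φ` denotes `C_G(ψ | φ)` and `Form.ev G` is mutual knowledge `E_G`. -/
theorem ckInduction {Agent AtomP : Type} (W : Type) (hW : Nonempty W)
    (R : Agent → W → W → Prop) (V : AtomP → Set W) (G : Set Agent) (w : W)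
    (φ ψ : Form Agent AtomP) :
    Sat (((Form.ev G (ψ.imp φ)).and
            (Form.ck G ψ (φ.imp (Form.ev G (ψ.imp φ))))).imp
          (Form.ck G ψ φ)) W R V w := by
  rw [sat_imp, sat_and]
  rintro ⟨hbase, hstep⟩ v hv
  induction hv with
  | single h => exact (sat_imp ..).mp (hbase _ h.1) h.2
  | tail hu h ih =>
    exact (sat_imp ..).mp ((sat_imp ..).mp (hstep _ hu) ih _ h.1) h.2
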